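/- arXiv:2203.16696 — 4 statements merged into one kernel-verified Lean document; each statement's English description precedes it below -/
import Mathlib

section
/- Let ω : ℝ^d → [0,∞) be continuous and for each λ > 0 set w^λ(x) = exp(ω(x)/λ). Then the following three conditions are equivalent: (1) there exist L > 0 and C > 0 such that ω(x+y) ≤ L(ω(x)+ω(y)) + C for all x, y ∈ ℝ^d; (2) for every λ > 0 there exist μ, ν > 0 and C' > 0 such that w^λ(x+y) ≤ C' w^μ(x) w^ν(y) for all x, y ∈ ℝ^d; (3) for all μ, ν > 0 there exist λ > 0 and C' > 0 such that w^λ(x+y) ≤ C' w^μ(x) w^ν(y) for all x, y ∈ ℝ^d. -/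
/-!
Taking logarithms, the bound `exp (ω (x + y) / lam) ≤ C' * exp (ω x / mu) * exp (ω y / nu)` reads
`ω (x + y) ≤ (lam / mu) * ω x + (lam / nu) * ω y + lam * log C'`. A single such bound therefore
already gives condition `(α)` (`alpha_of_exp_bound`), since `ω ≥ 0` allows both coefficients to be
enlarged to `lam / mu + lam / nu`. Conversely, `(α)` with constant `L` gives the bound as soon as
`L * mu ≤ lam` and `L * nu ≤ lam` (`exp_bound_of_alpha`). Such a choice is possible both when `lam`
is prescribed and when `mu`, `nu` are.
-/

open MeasureTheory Real Complex

/-- One instance of the exponential bound, for a single triple `lam, mu, nu`, implies `(α)`. -/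
lemma alpha_of_exp_bound {E : Type*} [Add E] {ω : E → ℝ} (hnonneg : ∀ x, 0 ≤ ω x)
    {lam mu nu C' : ℝ} (hlam : 0 < lam) (hmu : 0 < mu) (hnu : 0 < nu) (hC' : 0 < C')
    (h : ∀ x y, Real.exp (ω (x + y) / lam) ≤ C' * Real.exp (ω x / mu) * Real.exp (ω y / nu)) :
    ∃ L > (0:ℝ), ∃ C > (0:ℝ), ∀ x y, ω (x + y) ≤ L * (ω x + ω y) + C := by
  -- `log C'` may be nonpositive, so the additive constant uses `|log C'| + 1`.
  refine ⟨lam / mu + lam / nu, by positivity, lam * (|Real.log C'| + 1), by positivity, ?_⟩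
  intro x y
  have hxy := h x y
  rw [← Real.exp_log hC', ← Real.exp_add, ← Real.exp_add, Real.exp_le_exp,
    div_le_iff₀ hlam] at hxy
  have hlog : lam * Real.log C' ≤ lam * (|Real.log C'| + 1) :=
    mul_le_mul_of_nonneg_left (by linarith [le_abs_self (Real.log C')]) hlam.le
  have hx : 0 ≤ lam / nu * ω x := mul_nonneg (by positivity) (hnonneg x)
  have hy : 0 ≤ lam / mu * ω y := mul_nonneg (by positivity) (hnonneg y)
  calc ω (x + y) ≤ (Real.log C' + ω x / mu + ω y / nu) * lam := hxy
    _ = lam * Real.log C' + lam / mu * ω x + lam / nu * ω y := by ring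
    _ ≤ (lam / mu + lam / nu) * (ω x + ω y) + lam * (|Real.log C'| + 1) := by linarith

/-- `(α)` with constants `L, C` gives the exponential bound with `C' = exp (C / lam)`, provided
`lam` is at least `L * mu` and `L * nu`. -/
lemma exp_bound_of_alpha {E : Type*} [Add E] {ω : E → ℝ} (hnonneg : ∀ x, 0 ≤ ω x)
    {L C lam mu nu : ℝ} (hlam : 0 < lam) (hmu : 0 < mu) (hnu : 0 < nu)
    (hLmu : L * mu ≤ lam) (hLnu : L * nu ≤ lam)
    (h : ∀ x y, ω (x + y) ≤ L * (ω x + ω y) + C) (x y : E) :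
    Real.exp (ω (x + y) / lam) ≤
      Real.exp (C / lam) * Real.exp (ω x / mu) * Real.exp (ω y / nu) := by
  rw [← Real.exp_add, ← Real.exp_add, Real.exp_le_exp, div_le_iff₀ hlam]
  have hx : L * ω x ≤ lam / mu * ω x :=
    mul_le_mul_of_nonneg_right ((le_div_iff₀ hmu).2 hLmu) (hnonneg x)
  have hy : L * ω y ≤ lam / nu * ω y :=
    mul_le_mul_of_nonneg_right ((le_div_iff₀ hnu).2 hLnu) (hnonneg y)
  calc ω (x + y) ≤ L * (ω x + ω y) + C := h x y
    _ ≤ C + lam / mu * ω x + lam / nu * ω y := by linarith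
    _ = (C / lam + ω x / mu + ω y / nu) * lam := by field_simp

/-- For a non-negative continuous `ω` on `ℝ^d` and the associated weight
function system `w^λ = exp(ω/λ)`, the condition `(α)` on `ω` is equivalent to both the
Beurling condition `(M)` and the Roumieu condition `{M}` for the system `W_ω`. -/
theorem stmt_0 {d : ℕ} (ω : EuclideanSpace ℝ (Fin d) → ℝ)
    (hcont : Continuous ω) (hnonneg : ∀ x, 0 ≤ ω x) :
    List.TFAE [
      (∃ L > (0:ℝ), ∃ C > (0:ℝ), ∀ x y, ω (x + y) ≤ L * (ω x + ω y) + C),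
      (∀ lam > (0:ℝ), ∃ mu > (0:ℝ), ∃ nu > (0:ℝ), ∃ C' > (0:ℝ),
        ∀ x y : EuclideanSpace ℝ (Fin d),
          Real.exp (ω (x + y) / lam) ≤ C' * Real.exp (ω x / mu) * Real.exp (ω y / nu)),
      (∀ mu > (0:ℝ), ∀ nu > (0:ℝ), ∃ lam > (0:ℝ), ∃ C' > (0:ℝ),
        ∀ x y : EuclideanSpace ℝ (Fin d),
          Real.exp (ω (x + y) / lam) ≤ C' * Real.exp (ω x / mu) * Real.exp (ω y / nu))] := by
  tfae_have 1 → 2 := by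
    rintro ⟨L, hL, C, -, h⟩ lam hlam
    have hle : L * (lam / L) ≤ lam := (mul_div_cancel₀ lam hL.ne').le
    exact ⟨lam / L, by positivity, lam / L, by positivity, Real.exp (C / lam), Real.exp_pos _,
      exp_bound_of_alpha hnonneg hlam (by positivity) (by positivity) hle hle h⟩
  tfae_have 1 → 3 := by
    rintro ⟨L, hL, C, -, h⟩ mu hmu nu hnu
    have hlam : 0 < L * max mu nu := mul_pos hL (lt_max_of_lt_left hmu)
    exact ⟨L * max mu nu, hlam, Real.exp (C / (L * max mu nu)), Real.exp_pos _,
      exp_bound_of_alpha hnonneg hlam hmu hnu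
        (mul_le_mul_of_nonneg_left (le_max_left _ _) hL.le)
        (mul_le_mul_of_nonneg_left (le_max_right _ _) hL.le) h⟩
  tfae_have 2 → 1 := by
    intro h
    obtain ⟨mu, hmu, nu, hnu, C', hC', hb⟩ := h 1 one_pos
    exact alpha_of_exp_bound hnonneg one_pos hmu hnu hC' hb
  tfae_have 3 → 1 := by
    intro h
    obtain ⟨lam, hlam, C', hC', hb⟩ := h 1 one_pos 1 one_pos
    exact alpha_of_exp_bound hnonneg hlam one_pos one_pos hC' hb
  tfae_finish
end

section
/- Let ω : ℝ^d → [0,∞) be continuous and radially increasing, i.e. ω(x) ≤ ω(y) whenever |x| ≤ |y|, and let ε > 0. Then for every y ∈ ℝ^d one has |y|^d e^{−ε ω(y)} ≤ (1/|B̄(0,1)|) ∫_{ℝ^d} e^{−ε ω(x)} dx, where |B̄(0,1)| denotes the Lebesgue measure of the closed unit ball of ℝ^d and the inequality is interpreted in [0,∞]. In particular, if ∫_{ℝ^d} e^{−ε ω(x)} dx < ∞, then there exists C > 0 such that d·log|y| ≤ ε ω(y) + C for all y ∈ ℝ^d with |y| ≥ 1. -/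
/-!
On the closed ball of radius `‖y‖` the function `exp (-ε ω)` is at least its value at `y`, because
`ω` is radially increasing. Integrating this bound over the ball, whose volume is `‖y‖ ^ d` times
that of the unit ball, gives the inequality. If the integral is finite, the right-hand side is a
finite constant `K`, and taking logarithms of `‖y‖ ^ d * exp (-ε ω y) ≤ K` gives the growth bound.
-/

open MeasureTheory Real Complex

/-- For a radially increasing non-negative continuous `ω` on `ℝ^d` and `ε > 0`,
one has `|y|^d e^{-εω(y)} ≤ (1/|B̄(0,1)|) ∫ e^{-εω(x)} dx` (in `[0,∞]`); in particular, if
`e^{-εω}` is integrable then `d log|y| ≤ ε ω(y) + C` for all `|y| ≥ 1` and some `C > 0`. -/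
theorem stmt_3 {d : ℕ} (ω : EuclideanSpace ℝ (Fin d) → ℝ)
    (hcont : Continuous ω) (hnonneg : ∀ x, 0 ≤ ω x)
    (hrad : ∀ x y : EuclideanSpace ℝ (Fin d), ‖x‖ ≤ ‖y‖ → ω x ≤ ω y)
    (ε : ℝ) (hε : 0 < ε) :
    (∀ y : EuclideanSpace ℝ (Fin d),
      ENNReal.ofReal (‖y‖ ^ d * Real.exp (-ε * ω y)) ≤
        (volume (Metric.closedBall (0 : EuclideanSpace ℝ (Fin d)) 1))⁻¹ *
          ∫⁻ x, ENNReal.ofReal (Real.exp (-ε * ω x))) ∧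
    (Integrable (fun x : EuclideanSpace ℝ (Fin d) => Real.exp (-ε * ω x)) →
      ∃ C > (0:ℝ), ∀ y : EuclideanSpace ℝ (Fin d), 1 ≤ ‖y‖ →
        (d : ℝ) * Real.log ‖y‖ ≤ ε * ω y + C) := by
  have hV0 : volume (Metric.closedBall (0 : EuclideanSpace ℝ (Fin d)) 1) ≠ 0 :=
    (Metric.measure_closedBall_pos volume _ one_pos).ne'
  have hVtop : volume (Metric.closedBall (0 : EuclideanSpace ℝ (Fin d)) 1) ≠ ⊤ :=
    measure_closedBall_lt_top.ne
  have key : ∀ y : EuclideanSpace ℝ (Fin d),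
      ENNReal.ofReal (‖y‖ ^ d * Real.exp (-ε * ω y)) ≤
        (volume (Metric.closedBall (0 : EuclideanSpace ℝ (Fin d)) 1))⁻¹ *
          ∫⁻ x, ENNReal.ofReal (Real.exp (-ε * ω x)) := by
    intro y
    rw [mul_comm _ (∫⁻ x, _), ← div_eq_mul_inv,
      ENNReal.le_div_iff_mul_le (Or.inl hV0) (Or.inl hVtop)]
    calc ENNReal.ofReal (‖y‖ ^ d * Real.exp (-ε * ω y)) *
          volume (Metric.closedBall (0 : EuclideanSpace ℝ (Fin d)) 1)
        = ENNReal.ofReal (Real.exp (-ε * ω y)) *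
            volume (Metric.closedBall (0 : EuclideanSpace ℝ (Fin d)) ‖y‖) := by
          rw [Measure.addHaar_closedBall' volume _ (norm_nonneg y), finrank_euclideanSpace_fin,
            ENNReal.ofReal_mul (by positivity)]
          ring
      _ = ∫⁻ _ in Metric.closedBall (0 : EuclideanSpace ℝ (Fin d)) ‖y‖,
            ENNReal.ofReal (Real.exp (-ε * ω y)) := (setLIntegral_const _ _).symm
      _ ≤ ∫⁻ x in Metric.closedBall (0 : EuclideanSpace ℝ (Fin d)) ‖y‖,
            ENNReal.ofReal (Real.exp (-ε * ω x)) := by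
          refine setLIntegral_mono' Metric.isClosed_closedBall.measurableSet fun x hx => ?_
          have hω := hrad x y (mem_closedBall_zero_iff.mp hx)
          exact ENNReal.ofReal_le_ofReal (Real.exp_le_exp.mpr (by nlinarith))
      _ ≤ ∫⁻ x, ENNReal.ofReal (Real.exp (-ε * ω x)) := setLIntegral_le_lintegral _ _
  refine ⟨key, fun hint => ?_⟩
  have hK : (volume (Metric.closedBall (0 : EuclideanSpace ℝ (Fin d)) 1))⁻¹ *
      ∫⁻ x, ENNReal.ofReal (Real.exp (-ε * ω x)) ≠ ⊤ :=
    ENNReal.mul_ne_top (ENNReal.inv_ne_top.mpr hV0) hint.lintegral_lt_top.ne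
  generalize (volume (Metric.closedBall (0 : EuclideanSpace ℝ (Fin d)) 1))⁻¹ *
      ∫⁻ x, ENNReal.ofReal (Real.exp (-ε * ω x)) = K at key hK
  refine ⟨K.toReal + 1, by positivity, fun y hy => ?_⟩
  have hy0 : 0 < ‖y‖ := by linarith
  have hle := (ENNReal.ofReal_le_iff_le_toReal hK).mp (key y)
  -- The crude bound `log t ≤ t - 1` avoids taking the logarithm of `K`.
  have hlog := Real.log_le_sub_one_of_pos
    (show 0 < ‖y‖ ^ d * Real.exp (-ε * ω y) by positivity)
  rw [Real.log_mul (by positivity) (Real.exp_ne_zero _), Real.log_pow, Real.log_exp] at hlog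
  linarith
end

section
/- Let W = {w^λ : λ > 0} be a weight function system on ℝ^d and let B be a set of functions ℝ^d → ℂ. Then the following are equivalent: (1) there exists λ > 0 such that sup_{φ∈B} sup_{x∈ℝ^d} |φ(x)| w^λ(x) < ∞; (2) for every w ∈ V̄(W) one has sup_{φ∈B} sup_{x∈ℝ^d} |φ(x)| w(x) < ∞. -/
/-!
If some `W l` bounds `B`, every `w` in the Nachbin family does too, being at most a multiple of
`W l`. Conversely, suppose that no `W l` bounds `B`. For each `k` choose `φ k ∈ B` and `x k` with
`k < ‖φ k (x k)‖ * W (k + 1) (x k)`. Any infimum `⨅ n, c n * W (n + 1)` with `c n ≥ 0` lies in the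
Nachbin family: it is upper semicontinuous as an infimum of continuous functions, and it is
dominated by each of the weights, up to a constant. With `c n = 1 + ∑ k < n, W (k + 1) (x k)` this
infimum is at least `W (k + 1) (x k)` at `x k`: for `n ≤ k` because the weights decrease in the
index and `c n ≥ 1`, for `n > k` because `c n ≥ W (k + 1) (x k)` and the weights are at least `1`.
Hence it does not bound `B`.
-/

open MeasureTheory Real Complex

/-- A weight function system on `ℝ^d`: a family `w^λ (λ > 0)` of continuous functions
`ℝ^d → [1,∞)` with `w^λ ≤ w^μ` pointwise whenever `μ ≤ λ`. -/
def IsWeightSystem {d : ℕ} (w : ℝ → EuclideanSpace ℝ (Fin d) → ℝ) : Prop :=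
  (∀ l, 0 < l → Continuous (w l)) ∧
  (∀ l, 0 < l → ∀ x, 1 ≤ w l x) ∧
  (∀ l m, 0 < m → m ≤ l → ∀ x, w l x ≤ w m x)

/-- Membership in the maximal Nachbin family `V̄(W)`: non-negative upper semicontinuous
functions `w` with `sup_x w(x)/w^λ(x) < ∞` for every `λ > 0`. -/
def InNachbin {d : ℕ} (W : ℝ → EuclideanSpace ℝ (Fin d) → ℝ)
    (w : EuclideanSpace ℝ (Fin d) → ℝ) : Prop :=
  (∀ x, 0 ≤ w x) ∧ UpperSemicontinuous w ∧
  ∀ l, 0 < l → ∃ C : ℝ, ∀ x, w x ≤ C * W l x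

/-- The infimum of non-negative multiples of the weights `W 1, W 2, …` lies in the maximal Nachbin
family. -/
theorem inNachbin_iInf {d : ℕ} {W : ℝ → EuclideanSpace ℝ (Fin d) → ℝ} (hW : IsWeightSystem W)
    {c : ℕ → ℝ} (hc : ∀ n, 0 ≤ c n) :
    InNachbin W fun x => ⨅ n : ℕ, c n * W (n + 1) x := by
  obtain ⟨hcont, hone, hanti⟩ := hW
  have hpos (n : ℕ) : (0 : ℝ) < n + 1 := by positivity
  have hnn (x : EuclideanSpace ℝ (Fin d)) (n : ℕ) : 0 ≤ c n * W (n + 1) x :=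
    mul_nonneg (hc n) (zero_le_one.trans (hone _ (hpos n) x))
  have hbdd (x : EuclideanSpace ℝ (Fin d)) :
      BddBelow (Set.range fun n : ℕ => c n * W (n + 1) x) :=
    ⟨0, by rintro _ ⟨n, rfl⟩; exact hnn x n⟩
  refine ⟨fun x => Real.iInf_nonneg (hnn x), ?_, fun l hl => ?_⟩
  · exact upperSemicontinuous_ciInf hbdd fun n =>
      (continuous_const.mul (hcont _ (hpos n))).upperSemicontinuous
  · obtain ⟨n, hn⟩ := exists_nat_ge l
    refine ⟨c n, fun x => (ciInf_le (hbdd x) n).trans ?_⟩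
    exact mul_le_mul_of_nonneg_left (hanti _ _ hl (by linarith) x) (hc n)

/-- For a weight function system `W` and a set `B` of functions `ℝ^d → ℂ`,
`B` is uniformly bounded with respect to some weight `w^λ` of the system if and only if it
is uniformly bounded with respect to every weight of the maximal Nachbin family `V̄(W)`. -/
theorem stmt_4 {d : ℕ} (W : ℝ → EuclideanSpace ℝ (Fin d) → ℝ)
    (hW : IsWeightSystem W) (B : Set (EuclideanSpace ℝ (Fin d) → ℂ)) :
    (∃ l > (0:ℝ), ∃ C : ℝ, ∀ φ ∈ B, ∀ x, ‖φ x‖ * W l x ≤ C) ↔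
    (∀ w, InNachbin W w → ∃ C : ℝ, ∀ φ ∈ B, ∀ x, ‖φ x‖ * w x ≤ C) := by
  constructor
  · rintro ⟨l, hl, C, hC⟩ w ⟨-, -, hw⟩
    obtain ⟨D, hD⟩ := hw l hl
    refine ⟨|D| * C, fun φ hφ x => ?_⟩
    have hWx : 0 ≤ W l x := zero_le_one.trans (hW.2.1 l hl x)
    calc ‖φ x‖ * w x ≤ ‖φ x‖ * (|D| * W l x) := by
          gcongr
          exact (hD x).trans (mul_le_mul_of_nonneg_right (le_abs_self D) hWx)
      _ = |D| * (‖φ x‖ * W l x) := by ring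
      _ ≤ |D| * C := by gcongr; exact hC φ hφ x
  · intro h
    by_contra! hcon
    have hpos (n : ℕ) : (0 : ℝ) < n + 1 := by positivity
    choose φ hφ x hx using fun k : ℕ => hcon (k + 1) (hpos k) k
    have ha (k : ℕ) : 0 ≤ W (k + 1) (x k) := zero_le_one.trans (hW.2.1 _ (hpos k) _)
    set c : ℕ → ℝ := fun n => 1 + ∑ k ∈ Finset.range n, W (k + 1) (x k) with hc
    have hc1 (n : ℕ) : 1 ≤ c n :=
      le_add_of_nonneg_right (Finset.sum_nonneg fun k _ => ha k)
    have hca {k n : ℕ} (hkn : k < n) : W (k + 1) (x k) ≤ c n := by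
      have := Finset.single_le_sum (f := fun k : ℕ => W (k + 1) (x k)) (fun k _ => ha k)
        (Finset.mem_range.2 hkn)
      simp only [hc]
      linarith
    have hlow (k : ℕ) : W (k + 1) (x k) ≤ ⨅ n : ℕ, c n * W (n + 1) (x k) := by
      refine le_ciInf fun n => ?_
      rcases le_or_gt n k with hnk | hkn
      · have hmono : W (k + 1) (x k) ≤ W (n + 1) (x k) :=
          hW.2.2 _ _ (hpos n) (by gcongr) _
        exact hmono.trans (le_mul_of_one_le_left ((ha k).trans hmono) (hc1 n))
      · exact (hca hkn).trans
          (le_mul_of_one_le_right (zero_le_one.trans (hc1 n)) (hW.2.1 _ (hpos n) _))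
    obtain ⟨C, hC⟩ := h _ (inNachbin_iInf hW fun n => zero_le_one.trans (hc1 n))
    obtain ⟨k, hk⟩ := exists_nat_ge C
    have h1 := hC (φ k) (hφ k) (x k)
    have h2 := mul_le_mul_of_nonneg_left (hlow k) (norm_nonneg (φ k (x k)))
    linarith [hx k]
end

section
/- Let W = {w^λ : λ > 0} be a weight function system on ℝ^d satisfying the condition {M}: for all μ, ν > 0 there exist λ > 0 and C > 0 such that w^λ(x+y) ≤ C w^μ(x) w^ν(y) for all x, y ∈ ℝ^d. Then for every ν > 0 and every w ∈ V̄(W) there exist w̄ ∈ V̄(W) and C > 0 such that w(x+y) ≤ C w̄(x) w^ν(y) for all x, y ∈ ℝ^d. -/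
/-!
Fix `n` and `w ∈ V̄(W)`. For each `m > 0`, condition `{M}` gives some `l` with
`W l (x + y) ≲ W m x * W n y`; since `w ≲ W l`, there is a constant `K m` with
`w (x + y) ≤ K m * W m x * W n y` (`exists_shift_bound`). The pointwise infimum of the continuous
functions `K m * W m` over all `m > 0` is upper semicontinuous and dominated by a multiple of
every `W m`, so it lies in `V̄(W)`, and it still satisfies the shifted bound, with constant `1`.
-/

open MeasureTheory Real Complex

/-- Condition `{M}` (Roumieu). -/
def CondM_R {d : ℕ} (w : ℝ → EuclideanSpace ℝ (Fin d) → ℝ) : Prop :=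
  ∀ m > (0:ℝ), ∀ n > (0:ℝ), ∃ l > (0:ℝ), ∃ C > (0:ℝ),
    ∀ x y, w l (x + y) ≤ C * w m x * w n y

lemma exists_shift_bound {d : ℕ} {W : ℝ → EuclideanSpace ℝ (Fin d) → ℝ}
    (hW : IsWeightSystem W) (hM : CondM_R W) {n : ℝ} (hn : 0 < n)
    {w : EuclideanSpace ℝ (Fin d) → ℝ} (hw : InNachbin W w) {m : ℝ} (hm : 0 < m) :
    ∃ K : ℝ, 0 ≤ K ∧ ∀ x y, w (x + y) ≤ K * W m x * W n y := by
  obtain ⟨l, hl, C, hC, h⟩ := hM m hm n hn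
  obtain ⟨A, hA⟩ := hw.2.2 l hl
  refine ⟨|A| * C, by positivity, fun x y => ?_⟩
  have hpos : 0 ≤ W l (x + y) := zero_le_one.trans (hW.2.1 l hl _)
  calc w (x + y) ≤ A * W l (x + y) := hA _
    _ ≤ |A| * W l (x + y) := mul_le_mul_of_nonneg_right (le_abs_self A) hpos
    _ ≤ |A| * (C * W m x * W n y) := mul_le_mul_of_nonneg_left (h x y) (abs_nonneg A)
    _ = |A| * C * W m x * W n y := by ring

/-- if the weight function system `W` satisfies `{M}`, then every weight `w`
in the maximal Nachbin family `V̄(W)` is moderate: for every `ν > 0` there are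
`w̄ ∈ V̄(W)` and `C > 0` with `w(x+y) ≤ C w̄(x) w^ν(y)`. -/
theorem stmt_13 {d : ℕ} (W : ℝ → EuclideanSpace ℝ (Fin d) → ℝ)
    (hW : IsWeightSystem W) (hM : CondM_R W) :
    ∀ n > (0:ℝ), ∀ w, InNachbin W w →
      ∃ wbar, InNachbin W wbar ∧ ∃ C > (0:ℝ),
        ∀ x y, w (x + y) ≤ C * wbar x * W n y := by
  intro n hn w hw
  choose K hK0 hK using fun m : Set.Ioi (0 : ℝ) => exists_shift_bound hW hM hn hw m.2
  haveI : Nonempty (Set.Ioi (0 : ℝ)) := ⟨⟨1, Set.mem_Ioi.2 one_pos⟩⟩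
  have hnn : ∀ x (m : Set.Ioi (0 : ℝ)), 0 ≤ K m * W m x := fun x m =>
    mul_nonneg (hK0 m) (zero_le_one.trans (hW.2.1 m m.2 x))
  have hbdd : ∀ x, BddBelow (Set.range fun m : Set.Ioi (0 : ℝ) => K m * W m x) := fun x =>
    ⟨0, Set.forall_mem_range.2 (hnn x)⟩
  refine ⟨fun x => ⨅ m : Set.Ioi (0 : ℝ), K m * W m x, ⟨fun x => le_ciInf (hnn x), ?_, ?_⟩,
    1, one_pos, fun x y => ?_⟩
  · exact upperSemicontinuous_ciInf hbdd fun m =>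
      (continuous_const.mul (hW.1 m m.2)).upperSemicontinuous
  · exact fun l hl => ⟨K ⟨l, hl⟩, fun x => ciInf_le (hbdd x) ⟨l, hl⟩⟩
  · have hy : 0 < W n y := zero_lt_one.trans_le (hW.2.1 n hn y)
    rw [one_mul, ← div_le_iff₀ hy]
    exact le_ciInf fun m => (div_le_iff₀ hy).2 (hK m x y)
end
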